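/- Let F be a field and A a finite-dimensional associative unital F-algebra with m(A) ≥ 2, and set d = dim_F A, m = m(A). Then every generating set S of A satisfies l(S) < m·√(2d/(m−1) + 1/4) + m/2 − 2 (an inequality of real numbers). -/

import Mathlib

/-- `Lk F S k` is the `F`-linear span of all products of at most `k` elements of `S`
(the empty product `1` has length `0`); equivalently `V ^ k` with `V = span F ({1} ∪ S)`. -/
noncomputable def Lk (F : Type*) [Field F] {A : Type*} [Ring A] [Algebra F A]
    (S : Set A) (k : ℕ) : Submodule F A :=
  (Submodule.span F ({1} ∪ S)) ^ k

/-- The length of a generating set `S`: the least `k` with `Lk F S k = ⊤`. -/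
noncomputable def lenS (F : Type*) [Field F] {A : Type*} [Ring A] [Algebra F A]
    (S : Set A) : ℕ :=
  sInf {k | Lk F S k = ⊤}

/-- `mAlg F A` is the maximal degree over all `τ ∈ A` of the minimal polynomial of `τ`. -/
noncomputable def mAlg (F A : Type*) [Field F] [Ring A] [Algebra F A] : ℕ :=
  sSup {d | ∃ τ : A, d = (minpoly F τ).natDegree}

/-!
Order the words in the alphabet `S` by length and then lexicographically, for a well-order of `S`,
and call a word normal if its value in `A` is not a linear combination of values of smaller words.
Normal words have linearly independent values, factors of normal words are normal, and some normal
word `w` has length `l = l(S)`. Hence `w` has at most `d` distinct factors.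

With `m = m(A)`, the `m`-th power of a nonempty word is not normal, so `w` contains no `m`-th power.
Two equal factors of length `k` at distance `p` in `w` make a factor of length `p + k` have period
`p`, which yields an `m`-th power as soon as `(m - 1) p ≤ k`. Thus the factors of length `k` at the
first `⌊k / (m - 1)⌋ + 1` positions are distinct, and summing over `k < (m - 1) q` with
`q = ⌊(l + 2) / m⌋` gives `(m - 1) q (q + 1) / 2 ≤ d`. Now use `(l + 2) / m < q + 1`.
-/

section PowerFree

variable {α : Type*} {w : List α} {k n p q : ℕ}

/-- A word is `n`-power-free if none of its factors is the `n`-th power of a nonempty word. -/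
def IsPowerFree (n : ℕ) (w : List α) : Prop :=
  ∀ u : List α, u ≠ [] → ¬ (List.replicate n u).flatten <:+: w

theorem flatten_replicate_take_isPrefix_of_hasPeriod (hw : w.HasPeriod p) (hn : n * p ≤ w.length) :
    (List.replicate n (w.take p)).flatten <+: w := by
  induction n with
  | zero => simp
  | succ n ih =>
    have hpref : (List.replicate (n + 1) (w.take p)).flatten <+: w.take p ++ w := by
      rw [List.replicate_succ, List.flatten_cons, List.prefix_append_right_inj]
      exact ih ((Nat.mul_le_mul_right p n.le_succ).trans hn)
    refine List.prefix_of_prefix_length_le hpref hw ?_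
    calc (List.replicate (n + 1) (w.take p)).flatten.length
        = (n + 1) * (w.take p).length := by simp
      _ ≤ (n + 1) * p := Nat.mul_le_mul_left _ (List.length_take_le p w)
      _ ≤ w.length := hn

theorem hasPeriod_take_of_take_eq_take_drop (h : w.take k = (w.drop p).take k) :
    (w.take (p + k)).HasPeriod p := by
  have hsplit : w.take (p + k) = w.take p ++ w.take k := by rw [List.take_add, h]
  have htake : (w.take (p + k)).take p = w.take p := by simp [List.take_take]
  have hpref : w.take k <+: w.take (p + k) := List.take_prefix_take_left (Nat.le_add_left k p)
  rw [List.HasPeriod, htake]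
  nth_rewrite 1 [hsplit]
  exact (List.prefix_append_right_inj _).mpr hpref

theorem take_drop_isInfix (w : List α) (i k : ℕ) : (w.drop i).take k <:+: w :=
  (List.take_prefix k _).isInfix.trans (List.drop_suffix i w).isInfix

theorem IsPowerFree.take_drop_ne (hw : IsPowerFree (n + 1) w) {i : ℕ} (hp : 0 < p)
    (hlen : i + p + k ≤ w.length) (hk : n * p ≤ k) :
    (w.drop i).take k ≠ (w.drop (i + p)).take k := by
  intro h
  set x := (w.drop i).take (p + k) with hx
  have hxlen : x.length = p + k := by rw [hx, List.length_take, List.length_drop]; omega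
  have hperiod : x.HasPeriod p :=
    hasPeriod_take_of_take_eq_take_drop (by rwa [List.drop_drop])
  have hpower : (List.replicate (n + 1) (x.take p)).flatten <+: x :=
    flatten_replicate_take_isPrefix_of_hasPeriod hperiod (by rw [hxlen, add_one_mul]; omega)
  refine hw (x.take p) ?_ (hpower.isInfix.trans (take_drop_isInfix w i (p + k)))
  rw [← List.length_pos_iff, List.length_take]
  omega

theorem IsPowerFree.injOn_take_drop (hw : IsPowerFree (n + 1) w) {j : ℕ}
    (hlen : j + k ≤ w.length) (hk : n * j ≤ k) :
    Set.InjOn (fun i => (w.drop i).take k) (Set.Iic j) := by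
  have hne : ∀ i i', i < i' → i' ≤ j → (w.drop i).take k ≠ (w.drop i').take k := by
    intro i i' hlt hle
    obtain ⟨p, rfl⟩ := Nat.exists_eq_add_of_le hlt.le
    exact hw.take_drop_ne (by omega) (by omega)
      ((Nat.mul_le_mul_left n (by omega : p ≤ j)).trans hk)
  intro i hi i' hi' heq
  rcases lt_trichotomy i i' with hlt | rfl | hlt
  · exact absurd heq (hne i i' hlt hi')
  · rfl
  · exact absurd heq.symm (hne i' i hlt hi)

theorem two_mul_sum_range_div_add_one (n q : ℕ) :
    2 * ∑ k ∈ Finset.range (n * q), (k / n + 1) = n * q * (q + 1) := by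
  induction q with
  | zero => simp
  | succ q ih =>
    have hblock : ∑ b ∈ Finset.range n, ((n * q + b) / n + 1) = n * (q + 1) := by
      rw [Finset.sum_const_nat (m := q + 1), Finset.card_range]
      intro b hb
      have hbn := Finset.mem_range.mp hb
      rw [Nat.mul_add_div (by omega), Nat.div_eq_of_lt hbn, add_zero]
    rw [mul_add_one n q, Finset.sum_range_add, hblock, mul_add, ih]
    ring

theorem finite_setOf_isInfix (w : List α) : {v | v <:+: w}.Finite :=
  w.sublists.finite_toSet.subset fun _ hv => List.mem_sublists.mpr hv.sublist

theorem IsPowerFree.mul_le_two_mul_ncard_isInfix (hw : IsPowerFree (n + 1) w)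
    (hlen : (n + 1) * q ≤ w.length + 2) :
    n * q * (q + 1) ≤ 2 * {v | v <:+: w}.ncard := by
  let I : Finset (Σ _ : ℕ, ℕ) := (Finset.range (n * q)).sigma fun k => Finset.range (k / n + 1)
  let factor : (Σ _ : ℕ, ℕ) → List α := fun x => (w.drop x.2).take x.1
  have hfit : ∀ k < n * q, k / n + k ≤ w.length := by
    intro k hk
    have hdiv : k / n < q := Nat.div_lt_of_lt_mul hk
    rw [add_one_mul] at hlen
    omega
  have hinj : Set.InjOn factor I := by
    rintro ⟨k, i⟩ hx ⟨k', i'⟩ hx' heq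
    simp only [I, Finset.coe_sigma, Set.mem_sigma_iff, Finset.mem_coe, Finset.mem_range,
      Nat.lt_succ_iff] at hx hx'
    have hfit_k := hfit k hx.1
    have hfit_k' := hfit k' hx'.1
    obtain rfl : k = k' := by
      have hlength := congrArg List.length heq
      simp only [factor, List.length_take, List.length_drop] at hlength
      omega
    obtain rfl : i = i' :=
      hw.injOn_take_drop hfit_k (Nat.mul_div_le k n) hx.2 hx'.2 heq
    rfl
  have hmaps : factor '' I ⊆ {v | v <:+: w} := by
    rintro _ ⟨x, -, rfl⟩
    exact take_drop_isInfix w x.2 x.1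
  calc n * q * (q + 1) = 2 * I.card := by
        rw [← two_mul_sum_range_div_add_one, Finset.card_sigma]
        simp only [Finset.card_range]
    _ = 2 * (factor '' I).ncard := by rw [hinj.ncard_image, Set.ncard_coe_finset]
    _ ≤ 2 * {v | v <:+: w}.ncard :=
        Nat.mul_le_mul_left 2 (Set.ncard_le_ncard hmaps (finite_setOf_isInfix w))

end PowerFree

section EvalWord

variable {ι M : Type*} [Monoid M]

/-- The value in `M` of a word whose letters `i` are interpreted as `f i`. -/
def evalWord (f : ι → M) (w : List ι) : M :=
  (w.map f).prod

theorem evalWord_nil (f : ι → M) : evalWord f [] = 1 :=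
  rfl

theorem evalWord_cons (f : ι → M) (i : ι) (w : List ι) :
    evalWord f (i :: w) = f i * evalWord f w :=
  List.prod_cons

theorem evalWord_append (f : ι → M) (u v : List ι) :
    evalWord f (u ++ v) = evalWord f u * evalWord f v := by
  rw [evalWord, List.map_append, List.prod_append, evalWord, evalWord]

theorem evalWord_flatten_replicate (f : ι → M) (u : List ι) (n : ℕ) :
    evalWord f (List.replicate n u).flatten = evalWord f u ^ n := by
  induction n with
  | zero => rw [List.replicate_zero, List.flatten_nil, evalWord_nil, pow_zero]
  | succ n ih => rw [List.replicate_succ, List.flatten_cons, evalWord_append, ih, pow_succ']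

open scoped Pointwise in
theorem singleton_one_union_pow_eq_image_evalWord (S : Set M) (k : ℕ) :
    ({1} ∪ S) ^ k = evalWord ((↑) : S → M) '' {w | w.length ≤ k} := by
  induction k with
  | zero => simp [evalWord_nil, Set.singleton_one]
  | succ k ih =>
    rw [pow_succ', ih]
    apply Set.Subset.antisymm
    · rintro _ ⟨a, rfl | ha, _, ⟨w, hw, rfl⟩, rfl⟩
      · exact ⟨w, Nat.le_succ_of_le hw, (one_mul _).symm⟩
      · exact ⟨⟨a, ha⟩ :: w, Nat.succ_le_succ hw, evalWord_cons _ _ _⟩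
    · rintro _ ⟨_ | ⟨a, w⟩, hw, rfl⟩
      · exact ⟨1, Or.inl rfl, 1, ⟨[], Nat.zero_le k, rfl⟩, one_mul 1⟩
      · exact ⟨a, Or.inr a.2, _, ⟨w, Nat.le_of_succ_le_succ hw, rfl⟩, (evalWord_cons _ _ _).symm⟩

end EvalWord

theorem lex_append_right_of_length_eq {ι : Type*} {r : ι → ι → Prop} {u v : List ι}
    (h : List.Lex r u v) (hlen : u.length = v.length) (b : List ι) :
    List.Lex r (u ++ b) (v ++ b) := by
  induction h with
  | nil => simp at hlen
  | cons _ ih => exact List.Lex.cons (ih (Nat.succ_injective hlen))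
  | rel h => exact List.Lex.rel h

theorem shortlex_append_append {ι : Type*} {r : ι → ι → Prop} {u v : List ι}
    (h : List.Shortlex r u v) (a b : List ι) :
    List.Shortlex r (a ++ u ++ b) (a ++ v ++ b) := by
  rw [List.append_assoc, List.append_assoc]
  refine List.Shortlex.append_left ?_ a
  rcases List.shortlex_def.mp h with hlt | ⟨hlen, hlex⟩
  · exact List.Shortlex.of_length_lt (by simpa using hlt)
  · exact List.Shortlex.of_lex (by simpa using hlen) (lex_append_right_of_length_eq hlex hlen b)

theorem linearIndepOn_of_notMem_span_image_Iio {K V ι : Type*} [DivisionRing K] [AddCommGroup V]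
    [Module K V] [LinearOrder ι] {v : ι → V} {s : Set ι}
    (h : ∀ i ∈ s, v i ∉ Submodule.span K (v '' Set.Iio i)) : LinearIndepOn K v s := by
  rw [linearIndepOn_iff_linearIndepOn_finset]
  intro t
  induction t using Finset.induction_on_max with
  | empty => simp
  | insert i t ht ih =>
    rw [Finset.coe_insert, Set.insert_subset_iff]
    rintro ⟨hi, hts⟩
    exact (ih hts).insert fun hmem => h i hi (Submodule.span_mono (Set.image_mono ht) hmem)

theorem pow_mem_span_pow_of_natDegree_minpoly_le {R A : Type*} [CommRing R] [Ring A] [Algebra R A]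
    {x : A} (hx : IsIntegral R x) {m : ℕ} (hm : (minpoly R x).natDegree ≤ m) :
    x ^ m ∈ Submodule.span R ((x ^ ·) '' Set.Iio m) := by
  classical
  have hmem : x ^ m ∈ Subalgebra.toSubmodule (Algebra.adjoin R {x}) :=
    pow_mem (Algebra.self_mem_adjoin_singleton R x) m
  rw [← Submodule.span_range_natDegree_eq_adjoin (minpoly.monic hx) (minpoly.aeval R x),
    Finset.coe_image, Finset.coe_range] at hmem
  exact Submodule.span_mono (Set.image_mono (Set.Iio_subset_Iio hm)) hmem

section NormalWord

variable {ι R A : Type*} [CommSemiring R] [Semiring A] [Algebra R A] [LT ι]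

variable (R) in
/-- A word is normal if its value is not a linear combination of values of words that are smaller
in the shortlex order. -/
def IsNormalWord (f : ι → A) (w : List ι) : Prop :=
  evalWord f w ∉ Submodule.span R (evalWord f '' {v | List.Shortlex (· < ·) v w})

theorem isNormalWord_nil [Nontrivial A] (f : ι → A) : IsNormalWord R f [] := by
  simp [IsNormalWord, evalWord_nil]

theorem IsNormalWord.of_isInfix {f : ι → A} {u w : List ι} (hw : IsNormalWord R f w)
    (huw : u <:+: w) : IsNormalWord R f u := by
  obtain ⟨a, b, rfl⟩ := huw
  intro hu
  apply hw
  let φ : A →ₗ[R] A := LinearMap.mulRight R (evalWord f b) ∘ₗ LinearMap.mulLeft R (evalWord f a)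
  have hφ (v : List ι) : φ (evalWord f v) = evalWord f (a ++ v ++ b) := by
    simp only [φ, LinearMap.comp_apply, LinearMap.mulLeft_apply, LinearMap.mulRight_apply,
      evalWord_append]
  have hmem := Submodule.mem_map_of_mem (f := φ) hu
  rw [hφ, Submodule.map_span] at hmem
  refine Submodule.span_mono ?_ hmem
  rintro _ ⟨_, ⟨v, hv, rfl⟩, rfl⟩
  exact ⟨a ++ v ++ b, shortlex_append_append hv a b, (hφ v).symm⟩

theorem evalWord_mem_span_isNormalWord [WellFoundedLT ι] (f : ι → A) (w : List ι) :
    evalWord f w ∈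
      Submodule.span R (evalWord f '' {v | IsNormalWord R f v ∧ v.length ≤ w.length}) := by
  induction w using (List.Shortlex.wf (wellFounded_lt (α := ι))).induction with
  | _ w ih =>
    by_cases hw : IsNormalWord R f w
    · exact Submodule.subset_span ⟨w, ⟨hw, le_rfl⟩, rfl⟩
    · refine Submodule.span_le.mpr ?_ (not_not.mp hw)
      rintro _ ⟨v, hv, rfl⟩
      have hvw : v.length ≤ w.length := (List.shortlex_def.mp hv).elim le_of_lt fun h => h.1.le
      refine Submodule.span_mono (Set.image_mono ?_) (ih v hv)
      exact fun u hu => ⟨hu.1, hu.2.trans hvw⟩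

theorem span_evalWord_length_le_eq_span_isNormalWord [WellFoundedLT ι] (f : ι → A) (k : ℕ) :
    Submodule.span R (evalWord f '' {w | w.length ≤ k}) =
      Submodule.span R (evalWord f '' {w | IsNormalWord R f w ∧ w.length ≤ k}) := by
  refine le_antisymm (Submodule.span_le.mpr ?_)
    (Submodule.span_mono (Set.image_mono fun _ hw => hw.2))
  rintro _ ⟨w, hw, rfl⟩
  refine Submodule.span_mono (Set.image_mono ?_) (evalWord_mem_span_isNormalWord f w)
  exact fun v hv => ⟨hv.1, hv.2.trans hw⟩

end NormalWord

theorem IsNormalWord.isPowerFree {ι R A : Type*} [CommRing R] [Ring A] [Algebra R A]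
    [Algebra.IsIntegral R A] [LT ι] {f : ι → A} {w : List ι} (hw : IsNormalWord R f w) {m : ℕ}
    (hm : ∀ x : A, (minpoly R x).natDegree ≤ m) : IsPowerFree m w := by
  intro u hu hpow
  apply hw.of_isInfix hpow
  rw [evalWord_flatten_replicate]
  refine Submodule.span_mono ?_
    (pow_mem_span_pow_of_natDegree_minpoly_le (Algebra.IsIntegral.isIntegral _) (hm (evalWord f u)))
  rintro _ ⟨i, hi, rfl⟩
  refine ⟨(List.replicate i u).flatten, List.Shortlex.of_length_lt ?_,
    evalWord_flatten_replicate f u i⟩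
  simpa using Nat.mul_lt_mul_of_pos_right hi (List.length_pos_iff.mpr hu)

section NormalWordField

variable {ι K A : Type*} [Field K] [Ring A] [Algebra K A] [LinearOrder ι] [WellFoundedLT ι]

theorem linearIndepOn_evalWord_isNormalWord (f : ι → A) :
    LinearIndepOn K (evalWord f) {w | IsNormalWord K f w} := by
  classical
  have : IsWellOrder (List ι) (List.Shortlex (· < ·)) :=
    { toIsWellFounded := ⟨List.Shortlex.wf wellFounded_lt⟩ }
  let _ : LinearOrder (List ι) := IsWellOrder.linearOrder (List.Shortlex (· < ·))
  exact linearIndepOn_of_notMem_span_image_Iio fun _ hw => hw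

theorem IsNormalWord.ncard_isInfix_le_finrank [FiniteDimensional K A] {f : ι → A} {w : List ι}
    (hw : IsNormalWord K f w) : {v | v <:+: w}.ncard ≤ Module.finrank K A := by
  have hindep : LinearIndepOn K (evalWord f) {v | v <:+: w} :=
    (linearIndepOn_evalWord_isNormalWord f).mono fun _ hv => hw.of_isInfix hv
  have := (finite_setOf_isInfix w).fintype
  rw [Set.ncard_eq_toFinset_card', Set.toFinset_card]
  exact hindep.fintype_card_le_finrank

end NormalWordField

section Length

variable {F A : Type*} [Field F] [Ring A] [Algebra F A]

theorem Lk_eq_span_evalWord (S : Set A) (k : ℕ) :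
    Lk F S k = Submodule.span F (evalWord ((↑) : S → A) '' {w | w.length ≤ k}) := by
  rw [Lk, Submodule.span_pow, singleton_one_union_pow_eq_image_evalWord]

theorem exists_isNormalWord_length_eq_of_Lk_ne (S : Set A) [LT S] [WellFoundedLT S] {k : ℕ}
    (h : Lk F S k ≠ Lk F S (k + 1)) :
    ∃ w : List S, IsNormalWord F ((↑) : S → A) w ∧ w.length = k + 1 := by
  contrapose! h
  simp only [Lk_eq_span_evalWord, span_evalWord_length_le_eq_span_isNormalWord]
  congr! 4 with w
  exact and_congr_right fun hw => ⟨Nat.le_succ_of_le, fun hle => by have := h w hw; omega⟩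

theorem exists_isNormalWord_length_eq_lenS [Nontrivial A] (S : Set A) [LT S] [WellFoundedLT S] :
    ∃ w : List S, IsNormalWord F ((↑) : S → A) w ∧ w.length = lenS F S := by
  rcases hl : lenS F S with _ | k
  · -- This case includes the sets `S` that do not generate `A`: there `lenS F S = sInf ∅ = 0`.
    exact ⟨[], isNormalWord_nil _, rfl⟩
  · have htop : Lk F S (k + 1) = ⊤ :=
      hl ▸ Nat.sInf_mem (Nat.nonempty_of_pos_sInf (hl ▸ k.succ_pos : 0 < lenS F S))
    have hk : Lk F S k ≠ ⊤ := Nat.notMem_of_lt_sInf (hl ▸ k.lt_succ_self : k < lenS F S)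
    exact exists_isNormalWord_length_eq_of_Lk_ne S (htop ▸ hk)

theorem mul_le_two_mul_finrank_of_mul_le_lenS [FiniteDimensional F A] [Nontrivial A] (S : Set A)
    {n q : ℕ} (hdeg : ∀ x : A, (minpoly F x).natDegree ≤ n + 1) (hq : (n + 1) * q ≤ lenS F S + 2) :
    n * q * (q + 1) ≤ 2 * Module.finrank F A := by
  obtain ⟨_, _⟩ := exists_wellFoundedLT S
  obtain ⟨w, hw, hlen⟩ := exists_isNormalWord_length_eq_lenS (F := F) S
  calc n * q * (q + 1)
      ≤ 2 * {v | v <:+: w}.ncard := (hw.isPowerFree hdeg).mul_le_two_mul_ncard_isInfix (hlen ▸ hq)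
    _ ≤ 2 * Module.finrank F A := Nat.mul_le_mul_left 2 hw.ncard_isInfix_le_finrank

theorem natDegree_minpoly_le_mAlg [FiniteDimensional F A] (x : A) :
    (minpoly F x).natDegree ≤ mAlg F A :=
  le_csSup ⟨Module.finrank F A, by rintro _ ⟨y, rfl⟩; exact minpoly.natDegree_le y⟩ ⟨x, rfl⟩

theorem mAlg_eq_zero_of_subsingleton [Subsingleton A] : mAlg F A = 0 := by
  simp [mAlg, minpoly.subsingleton]

end Length

theorem lt_mul_sqrt_add_of_mul_le_two_mul {l m d q : ℝ} (hm : 1 < m)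
    (hd : (m - 1) * q * (q + 1) ≤ 2 * d) (hl : l + 2 < m * (q + 1)) :
    l < m * Real.sqrt (2 * d / (m - 1) + 1 / 4) + m / 2 - 2 := by
  have hdiv : q * (q + 1) ≤ 2 * d / (m - 1) := by
    rw [le_div_iff₀ (sub_pos.mpr hm)]
    linarith
  have hsqrt : q + 1 / 2 ≤ Real.sqrt (2 * d / (m - 1) + 1 / 4) :=
    Real.le_sqrt_of_sq_le (by linarith)
  have hmul := mul_le_mul_of_nonneg_left hsqrt (zero_le_one.trans hm.le)
  linarith

theorem stmt_18 (F A : Type*) [Field F] [Ring A] [Algebra F A] [FiniteDimensional F A]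
    (hm : 2 ≤ mAlg F A)
    (S : Set A) (hS : Algebra.adjoin F S = ⊤) :
    (lenS F S : ℝ) <
      (mAlg F A : ℝ) *
          Real.sqrt (2 * (Module.finrank F A : ℝ) / ((mAlg F A : ℝ) - 1) + 1 / 4) +
        (mAlg F A : ℝ) / 2 - 2 := by
  obtain ⟨n, hn⟩ : ∃ n, mAlg F A = n + 1 := ⟨mAlg F A - 1, by omega⟩
  have : Nontrivial A := not_subsingleton_iff_nontrivial.mp fun _ => by
    simp [mAlg_eq_zero_of_subsingleton] at hm
  have hdeg : ∀ x : A, (minpoly F x).natDegree ≤ n + 1 :=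
    fun x => hn ▸ natDegree_minpoly_le_mAlg x
  let q := (lenS F S + 2) / (n + 1)
  have hd : n * q * (q + 1) ≤ 2 * Module.finrank F A :=
    mul_le_two_mul_finrank_of_mul_le_lenS S hdeg (Nat.mul_div_le _ _)
  have hl : lenS F S + 2 < (n + 1) * (q + 1) := Nat.lt_mul_div_succ _ n.succ_pos
  refine lt_mul_sqrt_add_of_mul_le_two_mul (q := q) (by exact_mod_cast hm) ?_ ?_
  · rw [hn, Nat.cast_succ, add_sub_cancel_right]
    exact_mod_cast hd
  · rw [hn]
    exact_mod_cast hl
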